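/- Let K be a number field, f ∈ O_K[X] monic squarefree of odd degree at least 3, and S a finite set of nonzero primes of O_K such that O := O_{K,S} is a PID; let δ be a density on O. Let A, B, C ∈ O[X] with B² − A·C = f, [A,2B,C] primitive over O[X], A coprime to f in K[X], and assume [A,2B,C] is not in the principal genus over K[X], i.e. there exist no ε ∈ Kˣ and p ∈ K[X] with f dividing A − ε·p² in K[X]. Then δ(T_triv) = 0, where T_triv := {n ∈ O : [A(n), 2B(n), C(n)] is GL₂ᵗʷ-equivalent over O to the principal form [1, 0, −f(n)]}. -/

import Mathlib

open Polynomial IsDedekindDomain NumberField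

/-- The ring of `S`-integers of a number field `K`. -/
noncomputable abbrev SInt (K : Type*) [Field K] [NumberField K]
    (S : Finset (HeightOneSpectrum (𝓞 K))) : Type _ :=
  ((S : Set (HeightOneSpectrum (𝓞 K))).integer K)

/-! If `[A(n), 2B(n), C(n)]` is trivial, then evaluating the equivalence at `(1, 0)` gives
`u A(n) = a² - f(n) c²` for some unit `u`. The `S`-units being finitely generated, `u` runs through
finitely many classes modulo squares, so `u` may be fixed. As `f` is squarefree and the form is not
in the principal genus, there is an irreducible factor `g` of `f` over `K` such that `u A(θ)` is not
a square in `L = K(θ)`, where `θ` is a root of `g`. At almost every prime of `L` of prime norm `p`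
modulo which `u A(θ)` is not a square, `θ` reduces to a root `r ∈ 𝔽_p` of `f`, and `n` cannot reduce
to `r`: otherwise `u A(n)` would reduce to the square `a²`.

The sum of `1 / p` over these primes diverges. Otherwise, almost all primes of `L` of prime norm
would split in `L(√(u A(θ)))`, and the Dedekind zeta function of that field would grow at `1` like
the square of the one of `L`, but both have a simple pole. By the Chinese remainder theorem, the `n`
missing one residue class modulo each of these primes have density at most `∏ (1 - 1 / p) = 0`. -/

open Filter Topology

section FiberSums

variable {ι β : Type*} {f : ι → β} {g : β → ℝ}

lemma tsum_fiber_comp (f : ι → β) (g : β → ℝ) (b : β) :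
    ∑' i : {i // f i = b}, g (f i) = Nat.card {i // f i = b} * g b := by
  rw [tsum_congr fun i : {i // f i = b} => congrArg g i.2, tsum_const, nsmul_eq_mul]

lemma summable_comp_iff_summable_card_fiber_mul (hf : ∀ b, Finite {i // f i = b})
    (hg : ∀ b, 0 ≤ g b) :
    Summable (fun i => g (f i)) ↔ Summable fun b => Nat.card {i // f i = b} * g b := by
  rw [← (Equiv.sigmaFiberEquiv f).summable_iff,
    summable_sigma_of_nonneg (f := (fun i => g (f i)) ∘ _) fun x => hg _,
    ← funext (tsum_fiber_comp f g)]
  exact and_iff_right fun _ => Summable.of_finite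

lemma tsum_comp_eq_tsum_card_fiber_mul (hg : Summable fun i => g (f i)) :
    ∑' i, g (f i) = ∑' b, Nat.card {i // f i = b} * g b := by
  rw [← (Equiv.sigmaFiberEquiv f).tsum_eq, ← funext (tsum_fiber_comp f g)]
  exact ((Equiv.sigmaFiberEquiv f).summable_iff.mpr hg).tsum_sigma

end FiberSums

section IdealZeta

variable (F : Type*) [Field F] [NumberField F]

/-- The Dedekind zeta function of `F` at a real argument, as a sum over ideals. The zero ideal
contributes `0 ^ (-s) = 0`. -/
noncomputable def idealZeta (s : ℝ) : ℝ := ∑' I : Ideal (𝓞 F), (Ideal.absNorm I : ℝ) ^ (-s)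

lemma dedekindZeta_term_ofReal {s : ℝ} (hs : s ≠ 0) (n : ℕ) :
    LSeries.term (fun n => (Nat.card {I : Ideal (𝓞 F) // Ideal.absNorm I = n} : ℂ)) s n =
      (Nat.card {I : Ideal (𝓞 F) // Ideal.absNorm I = n} * (n : ℝ) ^ (-s) : ℝ) := by
  rw [LSeries.term_def]
  split_ifs with hn
  · simp [hn, Real.zero_rpow (neg_ne_zero.mpr hs)]
  · rw [Real.rpow_neg n.cast_nonneg, Complex.ofReal_mul, Complex.ofReal_inv,
      Complex.ofReal_cpow n.cast_nonneg, div_eq_mul_inv]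
    push_cast
    rfl

/-- Near `1` the zeta function is nonzero, so its series converges: otherwise its value would be
the junk value `0`. -/
lemma summable_absNorm_rpow {s : ℝ} (hs : 1 < s) :
    Summable fun I : Ideal (𝓞 F) => (Ideal.absNorm I : ℝ) ^ (-s) := by
  have hne : ∀ᶠ t : ℝ in 𝓝[>] 1, dedekindZeta F t ≠ 0 :=
    ((tendsto_sub_one_mul_dedekindZeta_nhdsGT F).eventually_ne
      (Complex.ofReal_ne_zero.mpr (dedekindZeta_residue_pos F).ne')).mono
        fun _ ht => right_ne_zero_of_mul ht
  obtain ⟨t, hzeta, _, hts⟩ := (hne.and (Ioo_mem_nhdsGT hs)).exists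
  have hLt := not_imp_comm.mp (LSeries.eq_zero_of_not_LSeriesSummable _ _) hzeta
  have hLs := LSeriesSummable.of_re_le_re (s' := (s : ℂ)) (by simpa using hts.le) hLt
  rw [LSeriesSummable, funext (dedekindZeta_term_ofReal F (by positivity)),
    Complex.summable_ofReal] at hLs
  exact (summable_comp_iff_summable_card_fiber_mul
    (fun n => (Ideal.finite_setOfPred_absNorm_eq n).to_subtype) fun _ => by positivity).mpr hLs

lemma dedekindZeta_ofReal {s : ℝ} (hs : 1 < s) : dedekindZeta F s = idealZeta F s := by
  rw [dedekindZeta, LSeries, tsum_congr (dedekindZeta_term_ofReal F (by positivity)),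
    ← Complex.ofReal_tsum, idealZeta, tsum_comp_eq_tsum_card_fiber_mul
      (g := fun n : ℕ => (n : ℝ) ^ (-s)) (summable_absNorm_rpow F hs)]

lemma tendsto_sub_one_mul_idealZeta :
    Tendsto (fun s => (s - 1) * idealZeta F s) (𝓝[>] 1) (𝓝 (dedekindZeta_residue F)) := by
  rw [← tendsto_ofReal_iff]
  refine (tendsto_sub_one_mul_dedekindZeta_nhdsGT F).congr' ?_
  filter_upwards [self_mem_nhdsWithin] with s hs
  rw [dedekindZeta_ofReal F hs]
  push_cast
  rfl

lemma one_le_idealZeta {s : ℝ} (hs : 1 < s) : 1 ≤ idealZeta F s := by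
  simpa [idealZeta] using (summable_absNorm_rpow F hs).le_tsum ⊤ fun I _ => by positivity

lemma isBigO_log_idealZeta_add_log_sub_one :
    (fun s => Real.log (idealZeta F s) + Real.log (s - 1)) =O[𝓝[>] 1] (1 : ℝ → ℝ) := by
  have hlog := (tendsto_sub_one_mul_idealZeta F).log (dedekindZeta_residue_pos F).ne'
  refine (hlog.isBigO_one ℝ).congr' ?_ .rfl
  filter_upwards [self_mem_nhdsWithin] with s hs
  rw [add_comm, Real.log_mul (sub_pos.mpr hs).ne'
    (zero_lt_one.trans_le (one_le_idealZeta F hs)).ne']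

end IdealZeta

section ProductExpansion

lemma sub_sq_le_log_one_add {x : ℝ} (hx : 0 ≤ x) : x - x ^ 2 ≤ Real.log (1 + x) := by
  refine le_trans ?_ (Real.one_sub_inv_le_log_of_pos (by positivity))
  rw [sub_eq_add_neg, ← sub_nonneg]
  have : 1 - (1 + x)⁻¹ - (x + -x ^ 2) = x ^ 3 / (1 + x) := by field_simp; ring
  rw [this]
  positivity

variable {ι : Type*} {x : ι → ℝ}

lemma exp_tsum_log_one_add (hx : ∀ i, 0 ≤ x i) (hsum : Summable x) :
    Real.exp (∑' i, Real.log (1 + x i)) = ∑' s : Finset ι, ∏ i ∈ s, x i := by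
  rw [Real.rexp_tsum_eq_tprod (fun i => by have := hx i; positivity)
    (Real.summable_log_one_add_of_summable hsum),
    tprod_one_add (summable_finsetProd_of_summable_norm hsum.norm)]

lemma tsum_finsetProd_pos (hx : ∀ i, 0 ≤ x i) (hsum : Summable x) :
    0 < ∑' s : Finset ι, ∏ i ∈ s, x i :=
  exp_tsum_log_one_add hx hsum ▸ Real.exp_pos _

lemma log_tsum_finsetProd_le (hx : ∀ i, 0 ≤ x i) (hsum : Summable x) :
    Real.log (∑' s : Finset ι, ∏ i ∈ s, x i) ≤ ∑' i, x i := by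
  rw [← exp_tsum_log_one_add hx hsum, Real.log_exp]
  refine (Real.summable_log_one_add_of_summable hsum).tsum_le_tsum (fun i => ?_) hsum
  linarith [Real.log_le_sub_one_of_pos (x := 1 + x i) (by linarith [hx i])]

lemma tsum_sub_tsum_sq_le_log_tsum_finsetProd (hx : ∀ i, 0 ≤ x i) (hsum : Summable x)
    (hsq : Summable fun i => x i ^ 2) :
    ∑' i, x i - ∑' i, x i ^ 2 ≤ Real.log (∑' s : Finset ι, ∏ i ∈ s, x i) := by
  rw [← exp_tsum_log_one_add hx hsum, Real.log_exp, ← hsum.tsum_sub hsq]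
  exact (hsum.sub hsq).tsum_le_tsum (fun i => sub_sq_le_log_one_add (hx i))
    (Real.summable_log_one_add_of_summable hsum)

end ProductExpansion

section SquarefreeIdeals

variable {R : Type*} [CommRing R] [IsDedekindDomain R]

lemma asIdeal_dvd_asIdeal_iff {v w : HeightOneSpectrum R} : v.asIdeal ∣ w.asIdeal ↔ v = w := by
  rw [Ideal.dvd_iff_le]
  exact ⟨fun h => HeightOneSpectrum.ext (w.isMaximal.eq_of_le v.isPrime.ne_top h).symm,
    fun h => h ▸ le_rfl⟩

lemma asIdeal_dvd_prod_asIdeal_iff {v : HeightOneSpectrum R} {s : Finset (HeightOneSpectrum R)} :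
    v.asIdeal ∣ ∏ w ∈ s, w.asIdeal ↔ v ∈ s := by
  simp [v.prime.dvd_finsetProd_iff, asIdeal_dvd_asIdeal_iff]

lemma injective_prod_asIdeal :
    Function.Injective fun s : Finset (HeightOneSpectrum R) => ∏ v ∈ s, v.asIdeal := by
  intro s t (hst : ∏ v ∈ s, v.asIdeal = ∏ v ∈ t, v.asIdeal)
  ext v
  rw [← asIdeal_dvd_prod_asIdeal_iff, hst, asIdeal_dvd_prod_asIdeal_iff]

lemma exists_sq_mul_prod_asIdeal_eq (I : Ideal R) :
    ∃ (J : Ideal R) (s : Finset (HeightOneSpectrum R)), J ^ 2 * ∏ v ∈ s, v.asIdeal = I := by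
  classical
  induction I using UniqueFactorizationMonoid.induction_on_prime with
  | h₁ => exact ⟨0, ∅, by simp⟩
  | h₂ I hI => exact ⟨1, ∅, by simp [Ideal.isUnit_iff.mp hI]⟩
  | h₃ I P _ hP ih =>
    obtain ⟨J, s, rfl⟩ := ih
    let v := HeightOneSpectrum.ofPrime hP
    by_cases hv : v ∈ s
    · refine ⟨J * P, s.erase v, ?_⟩
      rw [← s.mul_prod_erase _ hv, show v.asIdeal = P from rfl]
      ring
    · refine ⟨J, insert v s, ?_⟩
      rw [Finset.prod_insert hv, show v.asIdeal = P from rfl]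
      ring

end SquarefreeIdeals

section PrimeZeta

variable (F : Type*) [Field F] [NumberField F]

/-- The sum of `N(v) ^ (-s)` over the primes `v` of `F`; up to a bounded error it is the logarithm
of the zeta function as `s → 1⁺`. -/
noncomputable def primeZeta (s : ℝ) : ℝ :=
  ∑' v : HeightOneSpectrum (𝓞 F), (Ideal.absNorm v.asIdeal : ℝ) ^ (-s)

variable {F} {s : ℝ}

lemma summable_absNorm_asIdeal_rpow (hs : 1 < s) :
    Summable fun v : HeightOneSpectrum (𝓞 F) => (Ideal.absNorm v.asIdeal : ℝ) ^ (-s) :=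
  (summable_absNorm_rpow F hs).comp_injective fun _ _ => HeightOneSpectrum.ext

lemma absNorm_sq_rpow (I : Ideal (𝓞 F)) (s : ℝ) :
    ((Ideal.absNorm I : ℝ) ^ (-s)) ^ 2 = (Ideal.absNorm I : ℝ) ^ (-(2 * s)) := by
  rw [← Real.rpow_mul_natCast (by positivity)]
  ring_nf

lemma absNorm_prod_rpow (t : Finset (HeightOneSpectrum (𝓞 F))) (s : ℝ) :
    (Ideal.absNorm (∏ v ∈ t, v.asIdeal) : ℝ) ^ (-s) =
      ∏ v ∈ t, (Ideal.absNorm v.asIdeal : ℝ) ^ (-s) := by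
  rw [map_prod, Nat.cast_prod, Real.finsetProd_rpow _ _ fun _ _ => by positivity]

lemma tsum_finsetProd_le_idealZeta (hs : 1 < s) :
    ∑' t : Finset (HeightOneSpectrum (𝓞 F)), ∏ v ∈ t, (Ideal.absNorm v.asIdeal : ℝ) ^ (-s) ≤
      idealZeta F s := by
  simp only [← absNorm_prod_rpow]
  exact tsum_comp_le_tsum_of_inj (summable_absNorm_rpow F hs) (fun _ => by positivity)
    injective_prod_asIdeal

lemma idealZeta_le_mul_tsum_finsetProd (hs : 1 < s) :
    idealZeta F s ≤ idealZeta F (2 * s) *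
      ∑' t : Finset (HeightOneSpectrum (𝓞 F)), ∏ v ∈ t, (Ideal.absNorm v.asIdeal : ℝ) ^ (-s) := by
  have hJ := summable_absNorm_rpow F (s := 2 * s) (by linarith)
  have ht := (summable_absNorm_rpow F hs).comp_injective (injective_prod_asIdeal (R := 𝓞 F))
  simp only [Function.comp_def, absNorm_prod_rpow] at ht
  have hmul := hJ.mul_of_nonneg ht (fun _ => by positivity) fun _ => by positivity
  choose J t hJt using exists_sq_mul_prod_asIdeal_eq (R := 𝓞 F)
  rw [idealZeta, idealZeta, hJ.tsum_mul_tsum ht hmul]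
  refine (summable_absNorm_rpow F hs).tsum_le_tsum_of_inj (fun I => (J I, t I))
    (Function.HasLeftInverse.injective ⟨fun p => p.1 ^ 2 * ∏ v ∈ p.2, v.asIdeal, hJt⟩)
    (fun _ _ => by positivity) (fun I => ?_) hmul
  conv_lhs => rw [← hJt I]
  rw [← absNorm_sq_rpow, ← absNorm_prod_rpow, map_mul, map_pow, Nat.cast_mul, Nat.cast_pow,
    Real.mul_rpow (by positivity) (by positivity), Real.rpow_pow_comm (by positivity)]

lemma idealZeta_antitoneOn : AntitoneOn (idealZeta F) (Set.Ioi 1) := by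
  intro s hs t ht hst
  refine (summable_absNorm_rpow F ht).tsum_le_tsum (fun I => ?_) (summable_absNorm_rpow F hs)
  rcases (Ideal.absNorm I).eq_zero_or_pos with h0 | hpos
  · have hs0 : -s ≠ 0 := by linarith [Set.mem_Ioi.mp hs]
    have ht0 : -t ≠ 0 := by linarith [Set.mem_Ioi.mp ht]
    simp [h0, Real.zero_rpow, hs0, ht0]
  · exact Real.rpow_le_rpow_of_exponent_le (by exact_mod_cast hpos) (neg_le_neg hst)

lemma idealZeta_two_mul_le (hs : 1 < s) : idealZeta F (2 * s) ≤ idealZeta F 2 :=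
  idealZeta_antitoneOn (Set.mem_Ioi.mpr one_lt_two) (Set.mem_Ioi.mpr (by linarith)) (by linarith)

lemma primeZeta_le_idealZeta (hs : 1 < s) : primeZeta F s ≤ idealZeta F s :=
  tsum_comp_le_tsum_of_inj (summable_absNorm_rpow F hs) (fun _ => by positivity)
    fun _ _ => HeightOneSpectrum.ext

lemma log_idealZeta_sub_le_primeZeta (hs : 1 < s) :
    Real.log (idealZeta F s) - Real.log (idealZeta F 2) ≤ primeZeta F s := by
  have hx (v : HeightOneSpectrum (𝓞 F)) : 0 ≤ (Ideal.absNorm v.asIdeal : ℝ) ^ (-s) := by positivity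
  have hsum := summable_absNorm_asIdeal_rpow (F := F) hs
  have hlog := log_tsum_finsetProd_le hx hsum
  have hpos := tsum_finsetProd_pos hx hsum
  have h2s : 1 ≤ idealZeta F (2 * s) := one_le_idealZeta F (by linarith)
  have hle := Real.log_le_log (zero_lt_one.trans_le (one_le_idealZeta F hs))
    (idealZeta_le_mul_tsum_finsetProd hs)
  rw [Real.log_mul (by positivity) hpos.ne'] at hle
  have h2 : Real.log (idealZeta F (2 * s)) ≤ Real.log (idealZeta F 2) :=
    Real.log_le_log (by positivity) (idealZeta_two_mul_le hs)
  rw [primeZeta]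
  linarith

lemma primeZeta_le_log_idealZeta_add (hs : 1 < s) :
    primeZeta F s ≤ Real.log (idealZeta F s) + idealZeta F 2 := by
  have hx (v : HeightOneSpectrum (𝓞 F)) : 0 ≤ (Ideal.absNorm v.asIdeal : ℝ) ^ (-s) := by positivity
  have hsum := summable_absNorm_asIdeal_rpow (F := F) hs
  have hsq := summable_absNorm_asIdeal_rpow (F := F) (s := 2 * s) (by linarith)
  simp only [← absNorm_sq_rpow] at hsq
  have hlog := tsum_sub_tsum_sq_le_log_tsum_finsetProd hx hsum hsq
  have hpos := tsum_finsetProd_pos hx hsum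
  have hle := Real.log_le_log hpos (tsum_finsetProd_le_idealZeta hs)
  have h2 : ∑' v : HeightOneSpectrum (𝓞 F), ((Ideal.absNorm v.asIdeal : ℝ) ^ (-s)) ^ 2 ≤
      idealZeta F 2 := by
    simp only [absNorm_sq_rpow]
    exact (primeZeta_le_idealZeta (by linarith)).trans (idealZeta_two_mul_le hs)
  rw [primeZeta]
  linarith

variable (F)

lemma isBigO_primeZeta_add_log_sub_one :
    (fun s => primeZeta F s + Real.log (s - 1)) =O[𝓝[>] 1] (1 : ℝ → ℝ) := by
  have hdiff : (fun s => primeZeta F s - Real.log (idealZeta F s)) =O[𝓝[>] 1] (1 : ℝ → ℝ) := by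
    refine .of_bound (Real.log (idealZeta F 2) + idealZeta F 2) ?_
    filter_upwards [self_mem_nhdsWithin] with s hs
    have h2 := one_le_idealZeta F one_lt_two
    rw [Pi.one_apply, norm_one, mul_one, Real.norm_eq_abs, abs_le]
    constructor <;> linarith [log_idealZeta_sub_le_primeZeta (F := F) hs,
      primeZeta_le_log_idealZeta_add (F := F) hs, Real.log_nonneg h2]
  exact (hdiff.add (isBigO_log_idealZeta_add_log_sub_one F)).congr_left fun s => by ring

end PrimeZeta

section PoleComparison

variable {L M : Type*} [Field L] [NumberField L] [Field M] [NumberField M]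

lemma tendsto_neg_log_sub_one_atTop :
    Tendsto (fun s : ℝ => -Real.log (s - 1)) (𝓝[>] 1) atTop := by
  refine tendsto_neg_atBot_atTop.comp (Real.tendsto_log_nhdsGT_zero.comp ?_)
  refine tendsto_nhdsWithin_iff.mpr ⟨?_, ?_⟩
  · exact tendsto_nhdsWithin_of_tendsto_nhds (Continuous.tendsto' (by fun_prop) _ _ (sub_self 1))
  · exact eventually_mem_nhdsWithin.mono fun s hs => Set.mem_Ioi.mpr (sub_pos.mpr hs)

/-- The zeta functions of `L` and `M` both have a simple pole at `1`, so the primes of `L` which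
inject twice into those of `M` make up at most half of all primes of `L`. -/
lemma not_summable_inv_absNorm_compl_of_injective {G : Set (HeightOneSpectrum (𝓞 L))}
    {φ : Bool × G → HeightOneSpectrum (𝓞 M)} (hφ : Function.Injective φ)
    (hnorm : ∀ b v, Ideal.absNorm (φ (b, v)).asIdeal = Ideal.absNorm v.1.asIdeal) :
    ¬ Summable fun v : ↥Gᶜ => (Ideal.absNorm v.1.asIdeal : ℝ)⁻¹ := by
  intro hsum
  set C := ∑' v : ↥Gᶜ, (Ideal.absNorm v.1.asIdeal : ℝ)⁻¹
  have hcompare {s : ℝ} (hs : 1 < s) : 2 * primeZeta L s - primeZeta M s ≤ 2 * C := by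
    have hL := summable_absNorm_asIdeal_rpow (F := L) hs
    have hM := summable_absNorm_asIdeal_rpow (F := M) hs
    have hcompl : ∑' v : ↥Gᶜ, (Ideal.absNorm v.1.asIdeal : ℝ) ^ (-s) ≤ C := by
      refine (hL.subtype _).tsum_le_tsum (fun v => ?_) hsum
      rw [← Real.rpow_neg_one]
      have : 1 ≤ Ideal.absNorm v.1.asIdeal := Nat.one_le_iff_ne_zero.mpr fun h =>
        v.1.ne_bot (Ideal.absNorm_eq_zero_iff.mp h)
      exact Real.rpow_le_rpow_of_exponent_le (by exact_mod_cast this) (by linarith)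
    have htwice : 2 * ∑' v : G, (Ideal.absNorm v.1.asIdeal : ℝ) ^ (-s) ≤ primeZeta M s := by
      refine le_trans (le_of_eq ?_) (tsum_comp_le_tsum_of_inj hM (fun _ => by positivity) hφ)
      rw [(hM.comp_injective hφ).tsum_prod, tsum_bool]
      simp only [Function.comp_apply, hnorm, two_mul]
    have := hL.tsum_subtype_add_tsum_subtype_compl G
    rw [primeZeta, ← this]
    linarith
  have hO := ((isBigO_primeZeta_add_log_sub_one L).const_mul_left 2).sub
    (isBigO_primeZeta_add_log_sub_one M)
  obtain ⟨D, hD⟩ := hO.bound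
  obtain ⟨s, hDs, hs, hgt⟩ := (hD.and (eventually_mem_nhdsWithin.and
    (tendsto_neg_log_sub_one_atTop.eventually_gt_atTop (2 * C + D)))).exists
  rw [Pi.one_apply, norm_one, mul_one, Real.norm_eq_abs, abs_le] at hDs
  linarith [hcompare hs]

end PoleComparison

section InvolutionResidues

variable {A B : Type*} [CommRing A] [CommRing B] [Algebra A B] {σ : B →+* B} {α : A} {β : B}
  {v : Ideal A} {w : Ideal B} [w.IsPrime] [w.LiesOver v]

lemma exists_sub_algebraMap_mem_of_isSquare (hβ : β ^ 2 = algebraMap A B α)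
    (hα : IsSquare (Ideal.Quotient.mk v α)) :
    ∃ b : A, α - b ^ 2 ∈ v ∧ β - algebraMap A B b ∈ w := by
  obtain ⟨b', hb'⟩ := hα
  obtain ⟨b, rfl⟩ := Ideal.Quotient.mk_surjective b'
  have hb : α - b ^ 2 ∈ v := by
    rw [← Ideal.Quotient.eq, hb', map_pow, sq]
  have hprod : (β - algebraMap A B b) * (β - algebraMap A B (-b)) ∈ w := by
    convert (w.mem_of_liesOver v _).mp hb using 1
    simp only [map_neg, map_sub, map_pow, ← hβ]
    ring
  rcases ‹w.IsPrime›.mem_or_mem hprod with h | h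
  · exact ⟨b, hb, h⟩
  · exact ⟨-b, by rwa [neg_sq], h⟩

/-- For `y : B` both `t = y + σ y` and `s = β (y - σ y)` lie in `A`, and `2 α y = α t + β s`. -/
lemma surjective_algebraMap_quotient_of_isSquare [v.IsMaximal] (hσ : Function.Involutive σ)
    (hfix : ∀ y, σ y = y → y ∈ (algebraMap A B).range) (hβ : β ^ 2 = algebraMap A B α)
    (hσβ : σ β = -β) (h2α : 2 * α ∉ v) (hα : IsSquare (Ideal.Quotient.mk v α)) :
    Function.Surjective ((Ideal.Quotient.mk w).comp (algebraMap A B)) := by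
  intro y'
  obtain ⟨y, rfl⟩ := Ideal.Quotient.mk_surjective y'
  obtain ⟨b, -, hb⟩ := exists_sub_algebraMap_mem_of_isSquare (w := w) hβ hα
  obtain ⟨t, ht⟩ := hfix (y + σ y) (by rw [map_add, hσ y, add_comm])
  obtain ⟨s, hs⟩ := hfix (β * (y - σ y)) (by rw [map_mul, map_sub, hσ y, hσβ]; ring)
  obtain ⟨c, i, hi, hci⟩ := Ideal.IsMaximal.exists_inv ‹_› h2α
  refine ⟨c * (α * t + b * s), (Ideal.Quotient.eq).mpr ?_⟩
  convert w.sub_mem (w.mul_mem_left (-algebraMap A B (c * s)) hb)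
    (w.mul_mem_right y ((w.mem_of_liesOver v i).mp hi)) using 1
  have hone : algebraMap A B c * (2 * β ^ 2) + algebraMap A B i = 1 := by
    rw [hβ, ← map_ofNat (algebraMap A B), ← map_mul, ← map_mul, ← map_add, hci, map_one]
  simp only [map_mul, map_add, ht, hs, ← hβ]
  linear_combination y * hone

lemma comap_ne_of_isSquare (hβ : β ^ 2 = algebraMap A B α)
    (hσβ : σ β = -β) (hσA : ∀ a, σ (algebraMap A B a) = algebraMap A B a)
    (h2α : 2 * α ∉ v) (hα : IsSquare (Ideal.Quotient.mk v α)) : w.comap σ ≠ w := by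
  intro hw
  obtain ⟨b, hbv, hbw⟩ := exists_sub_algebraMap_mem_of_isSquare (w := w) hβ hα
  have hconj : σ (β - algebraMap A B b) ∈ w := Ideal.mem_comap.mp (hw.symm ▸ hbw)
  rw [map_sub, hσβ, hσA] at hconj
  have h2b : 2 * b ∈ v := by
    rw [w.mem_of_liesOver v]
    convert w.neg_mem (w.add_mem hbw hconj) using 1
    rw [map_mul, map_ofNat]
    ring
  apply h2α
  convert v.add_mem (v.mul_mem_left 2 hbv) (v.mul_mem_left b h2b) using 1
  ring

end InvolutionResidues

section SqrtExtension

/-- The algebra `F(√α)` over `F`, a field when `α` is not a square in `F`. -/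
abbrev SqrtExt {F : Type*} [Field F] (α : 𝓞 F) : Type _ :=
  QuadraticAlgebra F (α : F) 0

variable {F : Type*} [Field F] {α : 𝓞 F}

lemma fact_sq_ne_of_not_isSquare (hα : ¬ IsSquare (α : F)) :
    Fact (∀ r : F, r ^ 2 ≠ (α : F) + 0 * r) :=
  ⟨fun r hr => hα ⟨r, by linear_combination -hr⟩⟩

variable [Fact (∀ r : F, r ^ 2 ≠ (α : F) + 0 * r)]

instance [NumberField F] : NumberField (SqrtExt α) where
  to_charZero := inferInstance
  to_finiteDimensional := Module.Finite.trans F _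

lemma sqrtExt_gen_sq (α : 𝓞 F) :
    (⟨0, 1⟩ : SqrtExt α) ^ 2 = algebraMap (𝓞 F) (SqrtExt α) α := by
  rw [IsScalarTower.algebraMap_apply (𝓞 F) F (SqrtExt α)]
  ext <;> simp [sq]

lemma exists_ringOfIntegers_sqrt :
    ∃ β : 𝓞 (SqrtExt α), β ^ 2 = algebraMap (𝓞 F) _ α ∧ star (β : SqrtExt α) = -β := by
  have hint : IsIntegral ℤ (⟨0, 1⟩ : SqrtExt α) := by
    refine .of_pow two_pos ?_
    rw [sqrtExt_gen_sq]
    exact α.isIntegral_coe.algebraMap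
  refine ⟨⟨⟨0, 1⟩, hint⟩, RingOfIntegers.ext (sqrtExt_gen_sq α), ?_⟩
  change star (⟨0, 1⟩ : SqrtExt α) = -⟨0, 1⟩
  ext <;> simp

lemma mem_range_algebraMap_of_star_eq [CharZero F] {y : 𝓞 (SqrtExt α)}
    (hy : star (y : SqrtExt α) = y) : y ∈ (algebraMap (𝓞 F) (𝓞 (SqrtExt α))).range := by
  have him : (y : SqrtExt α).im = 0 := by
    have := congrArg QuadraticAlgebra.im hy
    rw [QuadraticAlgebra.im_star] at this
    exact self_eq_neg.mp this.symm
  have hre : algebraMap F (SqrtExt α) (y : SqrtExt α).re = y := by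
    ext <;> simp [him]
  have hint : IsIntegral ℤ (y : SqrtExt α).re := by
    rw [← isIntegral_algebraMap_iff (algebraMap F (SqrtExt α)).injective, hre]
    exact y.isIntegral_coe
  exact ⟨⟨_, hint⟩, RingOfIntegers.ext hre⟩

variable {v : HeightOneSpectrum (𝓞 F)}

lemma exists_injective_liesOver_of_isSquare (h2α : 2 * α ∉ v.asIdeal)
    (hsq : IsSquare (Ideal.Quotient.mk v.asIdeal α)) :
    ∃ w : Bool → HeightOneSpectrum (𝓞 (SqrtExt α)),
      Function.Injective w ∧ ∀ b, (w b).asIdeal.LiesOver v.asIdeal := by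
  obtain ⟨β, hβ, hβstar⟩ := exists_ringOfIntegers_sqrt (α := α)
  obtain ⟨w, hwprime, hw⟩ := (Ideal.nonempty_primesOver (S := 𝓞 (SqrtExt α)) v.asIdeal).some
  set σ := RingOfIntegers.mapRingHom (starRingEnd (SqrtExt α))
  have hσ (a : 𝓞 F) : σ (algebraMap (𝓞 F) _ a) = algebraMap (𝓞 F) _ a := by
    refine RingOfIntegers.ext ?_
    change star (algebraMap F (SqrtExt α) a) = algebraMap F (SqrtExt α) a
    ext <;> simp
  have hw' : (w.comap σ).LiesOver v.asIdeal := by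
    refine ⟨hw.over.trans (Ideal.ext fun a => ?_)⟩
    rw [Ideal.mem_comap, Ideal.mem_comap, Ideal.mem_comap, hσ]
  refine ⟨fun b => b.rec ⟨w, hwprime, Ideal.ne_bot_of_liesOver_of_ne_bot v.ne_bot w⟩
    ⟨w.comap σ, inferInstance, Ideal.ne_bot_of_liesOver_of_ne_bot v.ne_bot _⟩, ?_, ?_⟩
  · have hne := comap_ne_of_isSquare (w := w) hβ (RingOfIntegers.ext hβstar) hσ h2α hsq
    rw [Bool.injective_iff]
    exact fun h => hne (congrArg HeightOneSpectrum.asIdeal h).symm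
  · rintro (_ | _)
    exacts [hw, hw']

variable [NumberField F]

lemma absNorm_eq_of_isSquare (h2α : 2 * α ∉ v.asIdeal)
    (hsq : IsSquare (Ideal.Quotient.mk v.asIdeal α))
    {w : HeightOneSpectrum (𝓞 (SqrtExt α))} (hw : w.asIdeal.LiesOver v.asIdeal) :
    Ideal.absNorm w.asIdeal = Ideal.absNorm v.asIdeal := by
  obtain ⟨β, hβ, hβstar⟩ := exists_ringOfIntegers_sqrt (α := α)
  have hsurj := surjective_algebraMap_quotient_of_isSquare (w := w.asIdeal)
    (σ := RingOfIntegers.mapRingHom (starRingEnd (SqrtExt α)))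
    (fun y => RingOfIntegers.ext (star_star _))
    (fun y hy => mem_range_algebraMap_of_star_eq (congrArg RingOfIntegers.val hy)) hβ
    (RingOfIntegers.ext hβstar) h2α hsq
  have hker : RingHom.ker ((Ideal.Quotient.mk w.asIdeal).comp (algebraMap (𝓞 F) _)) =
      v.asIdeal := by
    rw [← RingHom.comap_ker, Ideal.mk_ker]
    exact hw.over.symm
  rw [Ideal.absNorm_apply, Ideal.absNorm_apply, Submodule.cardQuot_apply,
    Submodule.cardQuot_apply, ← hker]
  exact (Nat.card_congr (RingHom.quotientKerEquivOfSurjective hsurj).toEquiv).symm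

/-- Otherwise `F(√α)` would have two primes of norm `N(v)` above all but few primes `v` of `F`. -/
lemma not_summable_inv_absNorm_not_isSquare :
    ¬ Summable fun v : {v : HeightOneSpectrum (𝓞 F) |
        2 * α ∉ v.asIdeal ∧ IsSquare (Ideal.Quotient.mk v.asIdeal α)}ᶜ.Elem =>
      (Ideal.absNorm v.1.asIdeal : ℝ)⁻¹ := by
  choose w hwinj hw using fun v : {v : HeightOneSpectrum (𝓞 F) |
      2 * α ∉ v.asIdeal ∧ IsSquare (Ideal.Quotient.mk v.asIdeal α)} =>
    exists_injective_liesOver_of_isSquare v.2.1 v.2.2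
  refine not_summable_inv_absNorm_compl_of_injective (φ := fun p => w p.2 p.1) ?_
    fun b v => absNorm_eq_of_isSquare v.2.1 v.2.2 (hw v b)
  rintro ⟨b, v⟩ ⟨c, u⟩ (h : w v b = w u c)
  obtain rfl : v = u := by
    refine Subtype.ext (HeightOneSpectrum.ext ?_)
    rw [(hw v b).over, h, ← (hw u c).over]
  rw [hwinj v h]

end SqrtExtension

section ReductionToRationalPrimes

variable {F : Type*} [Field F]

/-- The rational prime below a prime of a number field. -/
noncomputable def primeBelow (v : HeightOneSpectrum (𝓞 F)) : Nat.Primes :=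
  haveI : NeZero v.asIdeal := ⟨v.ne_bot⟩
  ⟨Ideal.absNorm (v.asIdeal.under ℤ), Nat.absNorm_under_prime v.asIdeal⟩

instance liesOver_span_primeBelow (v : HeightOneSpectrum (𝓞 F)) :
    v.asIdeal.LiesOver (Ideal.span {((primeBelow v : ℕ) : ℤ)}) :=
  inferInstanceAs (v.asIdeal.LiesOver (Ideal.span {(Ideal.absNorm (v.asIdeal.under ℤ) : ℤ)}))

instance isMaximal_span_prime (p : Nat.Primes) : (Ideal.span {((p : ℕ) : ℤ)}).IsMaximal :=
  haveI : Fact (p : ℕ).Prime := ⟨p.2⟩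
  Int.ideal_span_isMaximal_of_prime (p : ℕ)

lemma injective_fiber_primeBelow (p : Nat.Primes) :
    Function.Injective fun v : {v : HeightOneSpectrum (𝓞 F) // primeBelow v = p} =>
      (⟨v.1.asIdeal, v.1.isPrime, by simpa only [v.2] using liesOver_span_primeBelow v.1⟩ :
        (Ideal.span {((p : ℕ) : ℤ)}).primesOver (𝓞 F)) :=
  fun _ _ h => Subtype.ext (HeightOneSpectrum.ext (congrArg Subtype.val h))

variable [NumberField F]

lemma absNorm_asIdeal_eq_or_sq_le (v : HeightOneSpectrum (𝓞 F)) :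
    Ideal.absNorm v.asIdeal = primeBelow v ∨ (primeBelow v : ℕ) ^ 2 ≤ Ideal.absNorm v.asIdeal := by
  rw [Ideal.absNorm_eq_pow_inertiaDeg' v.asIdeal (primeBelow v).2]
  have hdeg := Ideal.inertiaDeg'_pos (Ideal.span {((primeBelow v : ℕ) : ℤ)}) v.asIdeal
  obtain hone | htwo := (Nat.succ_le_of_lt hdeg).eq_or_lt'
  · exact .inl (by rw [hone, pow_one])
  · exact .inr (Nat.pow_le_pow_right (primeBelow v).2.pos htwo)

lemma finite_fiber_primeBelow (p : Nat.Primes) :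
    Finite {v : HeightOneSpectrum (𝓞 F) // primeBelow v = p} :=
  have := (IsDedekindDomain.primesOver_finite (Ideal.span {((p : ℕ) : ℤ)}) (𝓞 F)).to_subtype
  Finite.of_injective _ (injective_fiber_primeBelow p)

lemma card_fiber_primeBelow_le (p : Nat.Primes) :
    Nat.card {v : HeightOneSpectrum (𝓞 F) // primeBelow v = p} ≤ Module.finrank ℤ (𝓞 F) := by
  have := IsDedekindDomain.primesOver_finite (Ideal.span {((p : ℕ) : ℤ)}) (𝓞 F)
  have := this.fintype
  calc Nat.card {v : HeightOneSpectrum (𝓞 F) // primeBelow v = p}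
    _ ≤ Nat.card ((Ideal.span {((p : ℕ) : ℤ)}).primesOver (𝓞 F)) :=
      Nat.card_le_card_of_injective _ (injective_fiber_primeBelow p)
    _ = ∑ _q : (Ideal.span {((p : ℕ) : ℤ)}).primesOver (𝓞 F), 1 := by
      rw [Nat.card_eq_fintype_card, Fintype.card_eq_sum_ones]
    _ ≤ ∑ q : (Ideal.span {((p : ℕ) : ℤ)}).primesOver (𝓞 F),
          q.1.ramificationIdx ℤ * q.1.inertiaDeg ℤ := by
      refine Finset.sum_le_sum fun q _ => Nat.mul_pos ?_ ?_
      · exact q.1.ramificationIdx_pos ℤ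
      · exact q.1.inertiaDeg_pos ℤ
    _ = Module.finrank ℤ (𝓞 F) := Ideal.sum_ramification_inertia_eq_finrank _ (𝓞 F)

lemma summable_comp_primeBelow {g : Nat.Primes → ℝ} (hg : ∀ p, 0 ≤ g p) (hsum : Summable g) :
    Summable fun v : HeightOneSpectrum (𝓞 F) => g (primeBelow v) := by
  rw [summable_comp_iff_summable_card_fiber_mul finite_fiber_primeBelow hg]
  refine (hsum.mul_left (Module.finrank ℤ (𝓞 F) : ℝ)).of_nonneg_of_le
    (fun p => mul_nonneg (Nat.cast_nonneg _) (hg p)) fun p => ?_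
  gcongr
  · exact hg p
  · exact card_fiber_primeBelow_le p

/-- Primes of degree at least two contribute a convergent sum, so only those of prime norm
matter. -/
lemma summable_inv_absNorm_of_eventually {G : Set (HeightOneSpectrum (𝓞 F))} {s : Set Nat.Primes}
    (hG : ∀ᶠ v in cofinite, v ∈ G → ∀ p : Nat.Primes, Ideal.absNorm v.asIdeal = p → p ∈ s)
    (hs : Summable fun p : s => ((p.1 : ℕ) : ℝ)⁻¹) :
    Summable fun v : G => (Ideal.absNorm v.1.asIdeal : ℝ)⁻¹ := by
  let inv (p : Nat.Primes) : ℝ := ((p : ℕ) : ℝ)⁻¹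
  have hsq : Summable fun p : Nat.Primes => inv p ^ 2 := by
    refine (Nat.Primes.summable_rpow.mpr (by norm_num : (-2 : ℝ) < -1)).congr fun p => ?_
    rw [Real.rpow_neg (Nat.cast_nonneg _), Real.rpow_two, inv_pow]
  have hind : Summable (s.indicator inv) := summable_subtype_iff_indicator.mp hs
  have hinv (p) : 0 ≤ inv p := inv_nonneg.mpr (Nat.cast_nonneg _)
  have hindnn (p) : 0 ≤ s.indicator inv p := Set.indicator_nonneg (fun p _ => hinv p) p
  have hg := summable_comp_primeBelow (F := F)
    (fun p => add_nonneg (sq_nonneg (inv p)) (hindnn p)) (hsq.add hind)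
  refine summable_subtype_iff_indicator (f := fun v : HeightOneSpectrum (𝓞 F) =>
    (Ideal.absNorm v.asIdeal : ℝ)⁻¹) |>.mpr ?_
  refine hg.of_norm_bounded_eventually (hG.mono fun v hv => ?_)
  by_cases hvG : v ∈ G
  · rw [Set.indicator_of_mem hvG, Real.norm_of_nonneg (by positivity)]
    obtain heq | hle := absNorm_asIdeal_eq_or_sq_le v
    · rw [heq, Set.indicator_of_mem (hv hvG _ heq)]
      exact le_add_of_nonneg_left (sq_nonneg _)
    · refine le_add_of_le_of_nonneg ?_ (hindnn _)
      have hpos : (0 : ℝ) < (primeBelow v : ℕ) := by exact_mod_cast (primeBelow v).2.pos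
      rw [inv_pow]
      exact inv_anti₀ (by positivity) (by exact_mod_cast hle)
  · rw [Set.indicator_of_notMem hvG, norm_zero]
    exact add_nonneg (sq_nonneg _) (hindnn _)

lemma eventually_notMem_asIdeal {x : 𝓞 F} (hx : x ≠ 0) :
    ∀ᶠ v : HeightOneSpectrum (𝓞 F) in cofinite, x ∉ v.asIdeal := by
  have := Ideal.finite_factors (I := Ideal.span {x}) (by simpa using hx)
  simpa [eventually_cofinite, Ideal.dvd_span_singleton] using this

lemma not_summable_inv_primes_of_not_isSquare {α : 𝓞 F} (hα : ¬ IsSquare (α : F))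
    {s : Set Nat.Primes}
    (hs : ∀ᶠ v : HeightOneSpectrum (𝓞 F) in cofinite,
      ¬ IsSquare (Ideal.Quotient.mk v.asIdeal α) →
        ∀ p : Nat.Primes, Ideal.absNorm v.asIdeal = p → p ∈ s) :
    ¬ Summable fun p : s => ((p.1 : ℕ) : ℝ)⁻¹ := by
  have := fact_sq_ne_of_not_isSquare hα
  have hα0 : 2 * α ≠ 0 := by
    refine mul_ne_zero two_ne_zero ?_
    rintro rfl
    exact hα (by simp)
  refine mt (summable_inv_absNorm_of_eventually ?_) (not_summable_inv_absNorm_not_isSquare (α := α))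
  filter_upwards [hs, eventually_notMem_asIdeal hα0] with v hv h2α hmem
  exact hv fun hsq => hmem ⟨h2α, hsq⟩

end ReductionToRationalPrimes

section Density

lemma ne_bot_of_finite_quotient {R : Type*} [CommRing R] [Infinite R] {I : Ideal R}
    [Finite (R ⧸ I)] : I ≠ ⊥ := by
  rintro rfl
  exact (RingEquiv.quotientBot R).toEquiv.infinite_iff.mpr ‹_› |>.not_finite ‹_›

/-- A density on a ring `R`: a monotone, subadditive and translation invariant set function giving
each nonzero ideal the inverse of its norm. The case `I = ⊤` is the normalization `δ R = 1`. In
an infinite quotient `R ⧸ I` the cardinality is `0`, so that `I` has density zero. -/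
structure IsDensity {R : Type*} [CommRing R] (δ : Set R → ℝ) : Prop where
  mono : ∀ P Q, P ⊆ Q → δ P ≤ δ Q
  union_le : ∀ P Q, δ (P ∪ Q) ≤ δ P + δ Q
  translate : ∀ (x : R) (P : Set R), δ ((x + ·) '' P) = δ P
  ideal : ∀ I : Ideal R, I ≠ ⊥ → δ I = 1 / Nat.card (R ⧸ I)

namespace IsDensity

variable {R : Type*} [CommRing R] {δ : Set R → ℝ}

lemma nonneg (hδ : IsDensity δ) (P : Set R) : 0 ≤ δ P := by
  have := hδ.union_le P P
  rw [Set.union_self] at this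
  linarith

lemma biUnion_le (hδ : IsDensity δ) {ι : Type*} {s : Finset ι} (hs : s.Nonempty)
    (P : ι → Set R) : δ (⋃ i ∈ s, P i) ≤ ∑ i ∈ s, δ (P i) := by
  classical
  induction hs using Finset.Nonempty.cons_induction with
  | singleton a => simp only [Finset.mem_singleton, Set.iUnion_iUnion_eq_left,
      Finset.sum_singleton, le_refl]
  | cons a s h _ ih =>
    rw [Finset.sum_cons, Finset.cons_eq_insert, Finset.set_biUnion_insert]
    exact (hδ.union_le _ _).trans (by gcongr)

lemma biUnion_eq_zero (hδ : IsDensity δ) {ι : Type*} {s : Finset ι} (hs : s.Nonempty)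
    {P : ι → Set R} (hP : ∀ i ∈ s, δ (P i) = 0) : δ (⋃ i ∈ s, P i) = 0 :=
  ((hδ.biUnion_le hs P).trans_eq (Finset.sum_eq_zero hP)).antisymm (hδ.nonneg _)

lemma le_card_div_card_quotient (hδ : IsDensity δ) {I : Ideal R} (hI : I ≠ ⊥)
    {W : Finset (R ⧸ I)} (hW : W.Nonempty) {T : Set R}
    (hT : ∀ n ∈ T, Ideal.Quotient.mk I n ∈ W) : δ T ≤ W.card / Nat.card (R ⧸ I) := by
  have hcover : T ⊆ ⋃ y ∈ W, (y.out + ·) '' (I : Set R) := fun n hn => by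
    refine Set.mem_iUnion₂.mpr ⟨_, hT n hn, n - (Ideal.Quotient.mk I n).out, ?_,
      add_sub_cancel _ _⟩
    rw [SetLike.mem_coe, ← Ideal.Quotient.eq, Ideal.Quotient.mk_out]
  calc δ T ≤ ∑ y ∈ W, δ ((y.out + ·) '' (I : Set R)) :=
        (hδ.mono _ _ hcover).trans (hδ.biUnion_le hW _)
    _ = W.card / Nat.card (R ⧸ I) := by
      simp only [hδ.translate, hδ.ideal I hI, Finset.sum_const, nsmul_eq_mul, mul_one_div]

variable {ι : Type*} {m : ι → Ideal R} [∀ i, (m i).IsMaximal] [∀ i, Finite (R ⧸ m i)]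
  [Infinite R] {T : Set R} {r : ∀ i, R ⧸ m i}

/-- By the Chinese remainder theorem the missed residue classes are independent. -/
lemma le_prod_of_forall_ne [Fintype ι] (hδ : IsDensity δ) (hm : Function.Injective m)
    (hT : ∀ n ∈ T, ∀ i, Ideal.Quotient.mk (m i) n ≠ r i) :
    δ T ≤ ∏ i, (1 - (Nat.card (R ⧸ m i) : ℝ)⁻¹) := by
  classical
  have := fun i => Fintype.ofFinite (R ⧸ m i)
  let e := Ideal.quotientInfRingEquivPiQuotient m fun i j hij =>
    Ideal.isCoprime_of_isMaximal (hm.ne hij)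
  have := Finite.of_equiv _ e.symm.toEquiv
  have hbot : ⨅ i, m i ≠ ⊥ := ne_bot_of_finite_quotient
  let W : Finset (R ⧸ ⨅ i, m i) :=
    (Fintype.piFinset fun i => Finset.univ.erase (r i)).map e.symm.toEquiv.toEmbedding
  have hcard : W.card = ∏ i, (Nat.card (R ⧸ m i) - 1) := by
    simp [W, Fintype.card_piFinset]
  have hpos i : 1 < Nat.card (R ⧸ m i) := Finite.one_lt_card
  have hW : W.Nonempty := by
    rw [← Finset.card_pos, hcard]
    exact Finset.prod_pos fun i _ => Nat.sub_pos_of_lt (hpos i)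
  calc δ T ≤ W.card / Nat.card (R ⧸ ⨅ i, m i) := by
        refine hδ.le_card_div_card_quotient hbot hW fun n hn =>
          Finset.mem_map.mpr ⟨fun i => Ideal.Quotient.mk (m i) n, ?_,
            e.symm_apply_apply (Ideal.Quotient.mk _ n)⟩
        simpa only [Fintype.mem_piFinset, Finset.mem_erase, Finset.mem_univ, and_true]
          using hT n hn
    _ = ∏ i, (1 - (Nat.card (R ⧸ m i) : ℝ)⁻¹) := by
      rw [hcard, Nat.card_congr e.toEquiv, Nat.card_pi, Nat.cast_prod, Nat.cast_prod,
        ← Finset.prod_div_distrib]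
      refine Finset.prod_congr rfl fun i _ => ?_
      have := hpos i
      rw [Nat.cast_sub this.le]
      field_simp
      simp

lemma eq_zero_of_forall_ne (hδ : IsDensity δ) (hm : Function.Injective m)
    (hT : ∀ n ∈ T, ∀ i, Ideal.Quotient.mk (m i) n ≠ r i)
    (hsum : ¬ Summable fun i => (Nat.card (R ⧸ m i) : ℝ)⁻¹) : δ T = 0 := by
  by_contra hne
  have hpos : 0 < δ T := (hδ.nonneg T).lt_of_ne' hne
  refine hsum (summable_of_sum_le (c := -Real.log (δ T)) (fun i => by positivity) fun s => ?_)
  have hle : δ T ≤ Real.exp (-∑ i ∈ s, (Nat.card (R ⧸ m i) : ℝ)⁻¹) :=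
    calc δ T ≤ ∏ i : s, (1 - (Nat.card (R ⧸ m i) : ℝ)⁻¹) :=
          hδ.le_prod_of_forall_ne (hm.comp Subtype.val_injective) fun n hn i => hT n hn i
      _ = ∏ i ∈ s, (1 - (Nat.card (R ⧸ m i) : ℝ)⁻¹) :=
          Finset.prod_coe_sort s fun i => 1 - (Nat.card (R ⧸ m i) : ℝ)⁻¹
      _ ≤ ∏ i ∈ s, Real.exp (-(Nat.card (R ⧸ m i) : ℝ)⁻¹) := by
        refine Finset.prod_le_prod (fun i _ => sub_nonneg.mpr (Nat.cast_inv_le_one _))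
          fun i _ => Real.one_sub_le_exp_neg _
      _ = Real.exp (-∑ i ∈ s, (Nat.card (R ⧸ m i) : ℝ)⁻¹) := by
        rw [← Real.exp_sum, Finset.sum_neg_distrib]
  have := (Real.log_le_iff_le_exp hpos).mpr hle
  linarith

end IsDensity

end Density

section SquaresModulo

variable {R : Type*} [CommRing R]

lemma dvd_sub_sq_of_dvd_sub {x a p r : R} (hp : x ∣ a - p ^ 2) (hr : x ∣ r - p) :
    x ∣ a - r ^ 2 := by
  have : a - r ^ 2 = a - p ^ 2 - (r - p) * (r + p) := by ring
  exact this ▸ dvd_sub hp (hr.mul_right _)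

lemma exists_mul_dvd_sub_sq {x y a : R} (hxy : IsCoprime x y) (hx : ∃ p, x ∣ a - p ^ 2)
    (hy : ∃ q, y ∣ a - q ^ 2) : ∃ r, x * y ∣ a - r ^ 2 := by
  obtain ⟨p, hp⟩ := hx
  obtain ⟨q, hq⟩ := hy
  have ⟨s, t, hst⟩ := hxy
  refine ⟨p + s * x * (q - p), hxy.mul_dvd ?_ ?_⟩
  · exact dvd_sub_sq_of_dvd_sub hp ⟨s * (q - p), by ring⟩
  · exact dvd_sub_sq_of_dvd_sub hq ⟨t * (p - q), by linear_combination (q - p) * hst⟩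

lemma exists_dvd_sub_sq_of_squarefree [IsDomain R] [IsPrincipalIdealRing R] {x a : R}
    (hx : Squarefree x) (h : ∀ g, Irreducible g → g ∣ x → ∃ p, g ∣ a - p ^ 2) :
    ∃ p, x ∣ a - p ^ 2 := by
  induction x using UniqueFactorizationMonoid.induction_on_coprime with
  | h0 => exact absurd rfl hx.ne_zero
  | h1 hu => exact ⟨0, hu.dvd⟩
  | @hpr g i hg =>
    obtain rfl | rfl := hx.eq_zero_or_one_of_pow_of_not_isUnit hg.not_isUnit
    · exact ⟨0, by simp only [pow_zero, one_dvd]⟩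
    · exact h _ (by simpa only [pow_one] using hg.irreducible) dvd_rfl
  | @hcp y z hyz hy hz =>
    exact exists_mul_dvd_sub_sq hyz.isCoprime
      (hy hx.of_mul_left fun g hg hd => h g hg (hd.mul_right z))
      (hz hx.of_mul_right fun g hg hd => h g hg (hd.mul_left y))

lemma exists_dvd_sub_sq_of_isSquare_mk {g a : R[X]} (h : IsSquare (AdjoinRoot.mk g a)) :
    ∃ p, g ∣ a - p ^ 2 := by
  obtain ⟨s, hs⟩ := h
  obtain ⟨p, rfl⟩ := AdjoinRoot.mk_surjective s
  exact ⟨p, AdjoinRoot.mk_eq_mk.mp (by rw [hs, map_pow, sq])⟩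

/-- Gauss's lemma: a divisor of `f` over the fraction field is, up to a unit, defined over `R`. -/
lemma squarefree_map_of_monic [IsIntegrallyClosed R] (K : Type*) [Field K]
    [Algebra R K] [IsFractionRing R K] {f : R[X]} (hf : f.Monic) (hsq : Squarefree f) :
    Squarefree (f.map (algebraMap R K)) := by
  intro g hg
  have hinj := IsFractionRing.injective R K
  have hgf := dvd_of_mul_right_dvd hg
  have hlc : g.leadingCoeff ≠ 0 :=
    leadingCoeff_ne_zero.mpr (ne_zero_of_dvd_ne_zero (hf.map _).ne_zero hgf)
  have hunit : IsUnit (C g.leadingCoeff) := isUnit_C.mpr hlc.isUnit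
  obtain ⟨h, hh⟩ := IsIntegrallyClosed.eq_map_mul_C_of_dvd K hf hgf
  have hmonic : h.Monic := by
    refine monic_of_injective hinj (mul_right_cancel₀ hlc ?_)
    conv_rhs => rw [← hh]
    rw [leadingCoeff_mul, leadingCoeff_C, one_mul]
  rw [← hh] at hg ⊢
  have hdvd : h * h ∣ f := by
    refine (map_dvd_map _ hinj (hmonic.mul hmonic)).mp ?_
    rw [Polynomial.map_mul]
    exact (mul_dvd_mul (Dvd.intro _ rfl) (Dvd.intro _ rfl)).trans hg
  exact ((hsq h hdvd).map (mapRingHom _)).mul hunit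

end SquaresModulo

section SUnits

variable {R : Type*} [CommRing R] [IsDedekindDomain R] {K : Type*} [Field K] [Algebra R K]
  [IsFractionRing R K]

lemma exists_units_map_eq_of_valuation_eq_one {x : Kˣ}
    (hx : ∀ v : HeightOneSpectrum R, v.valuation K (x : K) = 1) :
    ∃ u : Rˣ, Units.map (algebraMap R K : R →* K) u = x := by
  obtain ⟨a, ha⟩ := HeightOneSpectrum.mem_integers_of_valuation_le_one K (x : K)
    fun v => (hx v).le
  obtain ⟨b, hb⟩ := HeightOneSpectrum.mem_integers_of_valuation_le_one K ((x⁻¹ : Kˣ) : K)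
    fun v => by rw [Units.val_inv_eq_inv_val, map_inv₀, hx v, inv_one]
  have hab : a * b = 1 := IsFractionRing.injective R K <| by
    rw [map_mul, ha, hb, map_one, Units.mul_inv]
  exact ⟨Units.mkOfMulEqOne a b hab, Units.ext ha⟩

/-- An `S`-unit is determined up to `Rˣ` by its finitely many valuations at the primes of `S`. -/
lemma fg_unit [Group.FG Rˣ] (S : Set (HeightOneSpectrum R)) [Finite S] : Group.FG (S.unit K) := by
  have := AddGroup.fg_of_group_fg (G := Rˣ)
  let U : Submodule ℤ (Additive Kˣ) := (Subgroup.toAddSubgroup (S.unit K)).toIntSubmodule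
  let val : Additive Kˣ →ₗ[ℤ] (S → ℤ) := LinearMap.pi fun v =>
    (MonoidHom.toAdditiveLeft (v.1.valuationOfNeZero (K := K))).toIntLinearMap
  let incl : Additive Rˣ →ₗ[ℤ] Additive Kˣ :=
    (MonoidHom.toAdditive (Units.map (algebraMap R K : R →* K))).toIntLinearMap
  have hker : U ⊓ LinearMap.ker val ≤ LinearMap.range incl := fun x ⟨hxU, hx⟩ => by
    obtain ⟨u, hu⟩ := exists_units_map_eq_of_valuation_eq_one (R := R) (x := x.toMul) fun v => by
      by_cases hv : v ∈ S
      · rw [← HeightOneSpectrum.valuationOfNeZero_eq]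
        exact congrArg WithZero.coe (congrFun hx ⟨v, hv⟩)
      · exact hxU v hv
    exact ⟨Additive.ofMul u, congrArg Additive.ofMul hu⟩
  have hfg : U.FG := Submodule.fg_of_fg_map_of_fg_inf_ker val (IsNoetherian.noetherian _)
    (Submodule.FG.of_le_of_isNoetherian hker)
  rw [Group.fg_iff_subgroup_fg, Subgroup.fg_iff_add_fg]
  exact (Submodule.fg_iff_addSubgroup_fg U).mp hfg

lemma fg_units_integer [Group.FG Rˣ] (S : Set (HeightOneSpectrum R)) [Finite S] :
    Group.FG (S.integer K)ˣ :=
  have : Group.FG (S.unit K) := fg_unit S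
  let e : S.unit K ≃* (S.integer K)ˣ := S.unitEquivUnitsInteger K
  Group.fg_of_surjective (f := e.toMonoidHom) e.surjective

end SUnits

section Reduction

variable {R : Type*} [CommRing R]

section DedekindDomain

variable {D : Type*} [CommRing D] [IsDedekindDomain D] {F : Type*} [Field F] [Algebra D F]
  [IsFractionRing D F] (v : HeightOneSpectrum D)

lemma isUnit_mk_primeCompl (d : v.asIdeal.primeCompl) :
    IsUnit (Ideal.Quotient.mk v.asIdeal (d : D)) := by
  let := Ideal.Quotient.field v.asIdeal
  exact isUnit_iff_ne_zero.mpr (mt Ideal.Quotient.eq_zero_iff_mem.mp d.2)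

/-- Reduction modulo `v` of the elements of the fraction field that are integral at `v`. -/
noncomputable def reduction : v.valuationSubringAtPrime F →+* D ⧸ v.asIdeal :=
  IsLocalization.lift (isUnit_mk_primeCompl v)

lemma reduction_algebraMap (a : D) :
    reduction v (algebraMap D (v.valuationSubringAtPrime F) a) = Ideal.Quotient.mk v.asIdeal a :=
  IsLocalization.lift_eq _ a

lemma exists_reduction_eval₂ {φ : R →+* F} (hφ : ∀ x, φ x ∈ v.valuationSubringAtPrime F) {θ : F}
    (hθ : θ ∈ v.valuationSubringAtPrime F) :
    ∃ (ψ : R →+* D ⧸ v.asIdeal) (r : D ⧸ v.asIdeal), ∀ (g : R[X]) (a b : D),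
      g.eval₂ φ θ * algebraMap D F b = algebraMap D F a →
        g.eval₂ ψ r * Ideal.Quotient.mk v.asIdeal b = Ideal.Quotient.mk v.asIdeal a := by
  let O := v.valuationSubringAtPrime F
  let φ' : R →+* O := φ.codRestrict O hφ
  refine ⟨(reduction v).comp φ', reduction v ⟨θ, hθ⟩, fun g a b hab => ?_⟩
  have hO : g.eval₂ φ' ⟨θ, hθ⟩ * algebraMap D O b = algebraMap D O a := Subtype.ext <|
    (congrArg (· * algebraMap D F b) (hom_eval₂ g φ' O.subtype ⟨θ, hθ⟩)).trans hab
  rw [← hom_eval₂, ← reduction_algebraMap (F := F), ← reduction_algebraMap (F := F), ← map_mul, hO]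

lemma mem_valuationSubringAtPrime {x : F} (hx : v.valuation F x ≤ 1) :
    x ∈ v.valuationSubringAtPrime F := by
  rwa [HeightOneSpectrum.valuationSubringAtPrime_eq_valuationSubring,
    Valuation.mem_valuationSubring_iff]

lemma mem_valuationSubringAtPrime_of_mul_eq {x : F} {a b : D} (hb : b ∉ v.asIdeal)
    (hab : x * algebraMap D F b = algebraMap D F a) : x ∈ v.valuationSubringAtPrime F := by
  refine mem_valuationSubringAtPrime v ?_
  have : v.valuation F (algebraMap D F a) ≤ 1 := v.valuation_le_one a
  rwa [← hab, map_mul, (v.valuation_eq_one_iff_notMem (K := F)).mpr hb, mul_one] at this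

end DedekindDomain

variable {F : Type*} [Field F] [NumberField F]

lemma exists_mul_eq_algebraMap (x : F) :
    ∃ a b : 𝓞 F, b ≠ 0 ∧ x * algebraMap (𝓞 F) F b = algebraMap (𝓞 F) F a :=
  have ⟨⟨a, b⟩, hab⟩ := IsLocalization.surj (nonZeroDivisors (𝓞 F)) x
  ⟨a, b, nonZeroDivisors.coe_ne_zero b, hab⟩

lemma eventually_mem_valuationSubringAtPrime (x : F) :
    ∀ᶠ v : HeightOneSpectrum (𝓞 F) in cofinite, x ∈ v.valuationSubringAtPrime F := by
  obtain ⟨a, b, hb, hab⟩ := exists_mul_eq_algebraMap x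
  filter_upwards [eventually_notMem_asIdeal hb] with v hv
  exact mem_valuationSubringAtPrime_of_mul_eq v hv hab

/-- The primes `p` such that, for some reduction `R → 𝔽_p`, the polynomial `f` has a root in `𝔽_p`
at which `A` is not a square. -/
def rootNonsquarePrimes (f A : R[X]) : Set Nat.Primes :=
  {p | ∃ (ψ : R →+* ZMod p) (r : ZMod p), f.eval₂ ψ r = 0 ∧ ¬ IsSquare (A.eval₂ ψ r)}

lemma isSquare_eval₂_of_eval_eq_sq_sub_mul_sq {k : Type*} [CommRing k] {ψ : R →+* k} {f A : R[X]}
    {n a c : R} {r : k} (hn : ψ n = r) (hf : f.eval₂ ψ r = 0)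
    (h : A.eval n = a ^ 2 - f.eval n * c ^ 2) : IsSquare (A.eval₂ ψ r) := by
  rw [← hn, eval₂_at_apply] at hf ⊢
  rw [h, map_sub, map_mul, hf, zero_mul, sub_zero]
  exact (IsSquare.sq a).map ψ

variable {φ : R →+* F}
  (hφ : ∀ᶠ v : HeightOneSpectrum (𝓞 F) in cofinite, ∀ x, φ x ∈ v.valuationSubringAtPrime F)
  {f A : R[X]} {θ : F} (hf : f.eval₂ φ θ = 0) (hA : ¬ IsSquare (A.eval₂ φ θ))

include hφ hf hA

lemma exists_eventually_not_isSquare_eval₂ :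
    ∃ α : 𝓞 F, ¬ IsSquare (α : F) ∧ ∀ᶠ v : HeightOneSpectrum (𝓞 F) in cofinite,
      ¬ IsSquare (Ideal.Quotient.mk v.asIdeal α) →
        ∃ (ψ : R →+* 𝓞 F ⧸ v.asIdeal) (r : 𝓞 F ⧸ v.asIdeal),
          f.eval₂ ψ r = 0 ∧ ¬ IsSquare (A.eval₂ ψ r) := by
  obtain ⟨a, b, hb, hab⟩ := exists_mul_eq_algebraMap (A.eval₂ φ θ)
  refine ⟨a * b, ?_, ?_⟩
  · have hbF : algebraMap (𝓞 F) F b ≠ 0 := by simpa using hb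
    have hαF : algebraMap (𝓞 F) F (a * b) = A.eval₂ φ θ * (algebraMap (𝓞 F) F b) ^ 2 := by
      rw [map_mul, ← hab, sq, mul_assoc]
    rintro (hsq : IsSquare (algebraMap (𝓞 F) F (a * b)))
    rw [hαF] at hsq
    refine hA ?_
    rw [← mul_div_cancel_right₀ (A.eval₂ φ θ) (pow_ne_zero 2 hbF)]
    exact hsq.div (IsSquare.sq _)
  · filter_upwards [hφ, eventually_mem_valuationSubringAtPrime θ] with v hφv hθv hα
    obtain ⟨ψ, r, hψ⟩ := exists_reduction_eval₂ v hφv hθv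
    refine ⟨ψ, r, ?_, fun hsq => hα ?_⟩
    · simpa using hψ f 0 1 (by rw [hf, zero_mul, map_zero])
    · rw [map_mul, ← hψ A a b hab, mul_assoc, ← sq]
      exact hsq.mul (IsSquare.sq _)

lemma not_summable_inv_primes_not_isSquare_eval₂ :
    ¬ Summable fun p : rootNonsquarePrimes f A => ((p.1 : ℕ) : ℝ)⁻¹ := by
  obtain ⟨α, hα, hv⟩ := exists_eventually_not_isSquare_eval₂ hφ hf hA
  refine not_summable_inv_primes_of_not_isSquare hα (hv.mono fun v hv hsq p hp => ?_)
  obtain ⟨ψ, r, hfr, hAr⟩ := hv hsq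
  have hcard : Nat.card (𝓞 F ⧸ v.asIdeal) = p := hp
  have : Finite (𝓞 F ⧸ v.asIdeal) := Nat.finite_of_card_ne_zero (hcard.trans_ne p.2.ne_zero)
  have := Fintype.ofFinite (𝓞 F ⧸ v.asIdeal)
  let e := ZMod.ringEquivOfPrime (𝓞 F ⧸ v.asIdeal) p.2 (Nat.card_eq_fintype_card.symm.trans hcard)
  refine ⟨(e.symm : _ →+* ZMod p).comp ψ, e.symm r, ?_, ?_⟩
  · rw [← RingEquiv.coe_toRingHom, ← hom_eval₂, hfr, map_zero]
  · rw [← RingEquiv.coe_toRingHom, ← hom_eval₂]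
    exact fun hsq => hAr (by simpa using hsq.map e)

omit hφ hf hA

namespace IsDensity

variable {δ : Set R → ℝ} [Infinite R] (hδ : IsDensity δ)

include hδ

lemma eq_zero_of_forall_zmod_ne {s : Set Nat.Primes} {ψ : ∀ p : s, R →+* ZMod (p.1 : ℕ)}
    {r : ∀ p : s, ZMod (p.1 : ℕ)} {T : Set R} (hT : ∀ n ∈ T, ∀ p, ψ p n ≠ r p)
    (hs : ¬ Summable fun p : s => ((p.1 : ℕ) : ℝ)⁻¹) : δ T = 0 := by
  have (p : s) : Fact (p.1 : ℕ).Prime := ⟨p.1.2⟩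
  have hsurj p : Function.Surjective (ψ p) := ZMod.ringHom_surjective (ψ p)
  let e p := RingHom.quotientKerEquivOfSurjective (hsurj p)
  have hcard p : Nat.card (R ⧸ RingHom.ker (ψ p)) = p.1 :=
    (Nat.card_congr (e p).toEquiv).trans (Nat.card_zmod _)
  let := fun p : s => ZMod.instField (p.1 : ℕ)
  have hmax p : (RingHom.ker (ψ p)).IsMaximal := RingHom.ker_isMaximal_of_surjective _ (hsurj p)
  have hfin p : Finite (R ⧸ RingHom.ker (ψ p)) := .of_equiv _ (e p).symm.toEquiv
  refine hδ.eq_zero_of_forall_ne (m := fun p => RingHom.ker (ψ p)) (r := fun p => (e p).symm (r p))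
    (fun p q hpq => ?_) (fun n hn p hnp => hT n hn p ?_) (by simpa only [hcard] using hs)
  · refine Subtype.ext (Subtype.ext ?_)
    rw [← hcard p, ← hcard q]
    exact congrArg (fun I : Ideal R => Nat.card (R ⧸ I)) hpq
  · exact (congrArg (e p) hnp).trans ((e p).apply_symm_apply (r p))

include hφ hf hA

lemma setOf_eval_eq_sq_sub_mul_sq_eq_zero :
    δ {n | ∃ a c, A.eval n = a ^ 2 - f.eval n * c ^ 2} = 0 := by
  have hs := not_summable_inv_primes_not_isSquare_eval₂ hφ hf hA
  choose ψ r hfr hAr using fun p : rootNonsquarePrimes f A => p.2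
  exact hδ.eq_zero_of_forall_zmod_ne (ψ := ψ) (r := r) (fun n ⟨_, _, h⟩ p hn =>
    hAr p (isSquare_eval₂_of_eval_eq_sq_sub_mul_sq hn (hfr p) h)) hs

end IsDensity

end Reduction

section SIntegers

variable {K : Type*} [Field K]

lemma eventually_under_notMem {L : Type*} [Field L] [NumberField L] [Algebra K L]
    (S : Finset (HeightOneSpectrum (𝓞 K))) :
    ∀ᶠ v : HeightOneSpectrum (𝓞 L) in cofinite, v.under (𝓞 K) ∉ S := by
  have hS : ∀ v₀ ∈ S, ∀ᶠ v : HeightOneSpectrum (𝓞 L) in cofinite, v.under (𝓞 K) ≠ v₀ := by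
    intro v₀ _
    obtain ⟨d, hd, hd0⟩ := Submodule.exists_mem_ne_zero_of_ne_bot v₀.ne_bot
    have hd0L : algebraMap (𝓞 K) (𝓞 L) d ≠ 0 := by simpa using hd0
    filter_upwards [eventually_notMem_asIdeal hd0L] with v hv
    rintro rfl
    exact hv hd
  filter_upwards [(Finset.eventually_all S).mpr hS] with v hv hvS
  exact hv _ hvS rfl

variable [NumberField K] {S : Finset (HeightOneSpectrum (𝓞 K))}

lemma eventually_algebraMap_mem_valuationSubringAtPrime {L : Type*} [Field L] [NumberField L]
    [Algebra K L] : ∀ᶠ v : HeightOneSpectrum (𝓞 L) in cofinite, ∀ x : SInt K S,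
      algebraMap K L x ∈ v.valuationSubringAtPrime L := by
  filter_upwards [eventually_under_notMem S] with v hv x
  obtain ⟨a, b, hab⟩ :=
    (v.under (𝓞 K)).exists_primeCompl_mul_eq_of_integer (x : K) (x.2 _ hv)
  refine mem_valuationSubringAtPrime_of_mul_eq v (a := algebraMap (𝓞 K) (𝓞 L) a)
    (b := algebraMap (𝓞 K) (𝓞 L) b) b.2 ?_
  have := congrArg (algebraMap K L) hab
  rwa [map_mul, ← IsScalarTower.algebraMap_apply, ← IsScalarTower.algebraMap_apply,
    IsScalarTower.algebraMap_apply (𝓞 K) (𝓞 L) L, IsScalarTower.algebraMap_apply (𝓞 K) (𝓞 L) L]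
    at this

instance : Group.FG (SInt K S)ˣ :=
  have : Group.FG (𝓞 K)ˣ := Group.fg_iff_monoid_fg.mpr inferInstance
  fg_units_integer (S : Set (HeightOneSpectrum (𝓞 K)))

namespace IsDensity

lemma setOf_units_mul_eval_eq_zero {R : Type*} [CommRing R] [Group.FG Rˣ] {δ : Set R → ℝ}
    (hδ : IsDensity δ) {f A : R[X]}
    (h : ∀ u : Rˣ, δ {n | ∃ a c, u * A.eval n = a ^ 2 - f.eval n * c ^ 2} = 0) :
    δ {n | ∃ (u : Rˣ) (a c : R), u * A.eval n = a ^ 2 - f.eval n * c ^ 2} = 0 := by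
  have := Subgroup.finiteIndex_range_powMonoidHom_of_fg Rˣ two_ne_zero
  let Q := Rˣ ⧸ (powMonoidHom 2 : Rˣ →* Rˣ).range
  have := Fintype.ofFinite Q
  refine ((hδ.mono _ _ fun n hn => ?_).trans_eq <| hδ.biUnion_eq_zero
    (Finset.univ_nonempty (α := Q)) fun q _ => h q.out).antisymm (hδ.nonneg _)
  obtain ⟨u, a, c, hac⟩ := hn
  obtain ⟨⟨_, w, rfl⟩, hw⟩ := QuotientGroup.mk_out_eq_mul (powMonoidHom 2 : Rˣ →* Rˣ).range u
  refine Set.mem_biUnion (Finset.mem_univ (u : Q)) ⟨w * a, w * c, ?_⟩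
  have hout : ((Quotient.out (u : Q) : Rˣ) : R) = u * w ^ 2 := congrArg Units.val hw
  rw [hout]
  linear_combination (w : R) ^ 2 * hac

variable {δ : Set (SInt K S) → ℝ} (hδ : IsDensity δ) {f A : (SInt K S)[X]}
  (hf : Squarefree (f.map (algebraMap (SInt K S) K)))

include hδ hf

lemma setOf_eval_eq_sq_sub_mul_sq_eq_zero_of_not_dvd
    (hA : ¬ ∃ p, f.map (algebraMap (SInt K S) K) ∣ A.map (algebraMap (SInt K S) K) - p ^ 2) :
    δ {n | ∃ a c, A.eval n = a ^ 2 - f.eval n * c ^ 2} = 0 := by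
  obtain ⟨g, hg, hgf, hgA⟩ : ∃ g, Irreducible g ∧ g ∣ f.map (algebraMap (SInt K S) K) ∧
      ¬ ∃ p, g ∣ A.map (algebraMap (SInt K S) K) - p ^ 2 := by
    by_contra! h
    exact hA (exists_dvd_sub_sq_of_squarefree hf h)
  have : Fact (Irreducible g) := ⟨hg⟩
  have := (AdjoinRoot.powerBasis hg.ne_zero).finite
  have : NumberField (AdjoinRoot g) := .of_module_finite K (AdjoinRoot g)
  have heval (h : (SInt K S)[X]) :
      h.eval₂ ((AdjoinRoot.of g).comp (algebraMap (SInt K S) K)) (AdjoinRoot.root g) =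
        AdjoinRoot.mk g (h.map (algebraMap (SInt K S) K)) := by
    rw [← eval₂_map, ← AdjoinRoot.algebraMap_eq, ← aeval_def, AdjoinRoot.aeval_eq]
  refine hδ.setOf_eval_eq_sq_sub_mul_sq_eq_zero (φ := (AdjoinRoot.of g).comp (algebraMap _ K))
    (θ := AdjoinRoot.root g) eventually_algebraMap_mem_valuationSubringAtPrime ?_ ?_
  · rw [heval, AdjoinRoot.mk_eq_zero.mpr hgf]
  · rw [heval]
    exact mt exists_dvd_sub_sq_of_isSquare_mk hgA

lemma setOf_units_mul_eval_eq_zero_of_not_dvd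
    (hA : ¬ ∃ ε : K, ε ≠ 0 ∧ ∃ p, f.map (algebraMap (SInt K S) K) ∣
      A.map (algebraMap (SInt K S) K) - C ε * p ^ 2) :
    δ {n | ∃ (u : (SInt K S)ˣ) (a c : SInt K S), u * A.eval n = a ^ 2 - f.eval n * c ^ 2} = 0 := by
  refine hδ.setOf_units_mul_eval_eq_zero fun u => ?_
  have := hδ.setOf_eval_eq_sq_sub_mul_sq_eq_zero_of_not_dvd hf (A := C (u : SInt K S) * A)
  simp only [eval_mul, eval_C] at this
  refine this ?_
  rintro ⟨p, hp⟩
  let w := Units.map (algebraMap (SInt K S) K : SInt K S →* K) u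
  refine hA ⟨(w⁻¹ : Kˣ), Units.ne_zero _, p, ?_⟩
  have hw : (C (w⁻¹ : Kˣ).val * C w.val : K[X]) = 1 := by rw [← C_mul, Units.inv_mul, C_1]
  have hpw := hp.mul_left (C (w⁻¹ : Kˣ).val)
  rwa [Polynomial.map_mul, map_C, mul_sub, ← mul_assoc,
    show algebraMap (SInt K S) K u = w.val from rfl, hw, one_mul] at hpw

end IsDensity

theorem trivial_specializations_density_zero_general
    (f A B C : (SInt K S)[X]) (hf : Squarefree (f.map (algebraMap (SInt K S) K)))
    {δ : Set (SInt K S) → ℝ} (hδ : IsDensity δ)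
    (hgenus : ¬ ∃ ε : K, ε ≠ 0 ∧ ∃ p : K[X], f.map (algebraMap (SInt K S) K) ∣
      A.map (algebraMap (SInt K S) K) - Polynomial.C ε * p ^ 2) :
    δ {n : SInt K S |
      ∃ M : Matrix (Fin 2) (Fin 2) (SInt K S), IsUnit M.det ∧
        ∀ x y : SInt K S,
          M.det * (A.eval n * x ^ 2 + 2 * B.eval n * x * y + C.eval n * y ^ 2) =
            (M 0 0 * x + M 0 1 * y) ^ 2 - f.eval n * (M 1 0 * x + M 1 1 * y) ^ 2} = 0 := by
  refine ((hδ.mono _ _ ?_).trans_eq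
    (hδ.setOf_units_mul_eval_eq_zero_of_not_dvd hf hgenus)).antisymm (hδ.nonneg _)
  rintro n ⟨M, hM, h⟩
  refine ⟨hM.unit, M 0 0, M 1 0, ?_⟩
  simpa using h 1 0

end SIntegers

/-- **Trivial specializations have density 0.**
`K` a number field, `f ∈ O_K[X]` monic squarefree of odd degree `≥ 3`, `S` a
finite set of primes with `O = O_{K,S}` a PID, `δ` a density on `O` (a
subadditive, monotone, translation-invariant `[0,1]`-valued set function with
`δ(O) = 1` and `δ(I) = 1/N(I)` for nonzero ideals `I`). If `[A,2B,C]` is a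
primitive form over `O[X]` with `B² − AC = f`, `A` coprime to `f` in `K[X]`,
and not in the principal genus over `K[X]` (no `ε ∈ Kˣ`, `p ∈ K[X]` satisfy
`f ∣ A − ε·p²`), then the set of `n ∈ O` for which `[A(n), 2B(n), C(n)]` is
`GL₂ᵗʷ`-equivalent over `O` to the principal form `[1, 0, −f(n)]` has density
`0`. -/
theorem trivial_specializations_density_zero
    (K : Type*) [Field K] [NumberField K]
    (S : Finset (HeightOneSpectrum (𝓞 K)))
    (hPID : IsPrincipalIdealRing (SInt K S))
    (f : Polynomial (𝓞 K)) (hmonic : f.Monic) (hsqfree : Squarefree f)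
    (hodd : Odd f.natDegree) (hdeg : 3 ≤ f.natDegree)
    (δ : Set (SInt K S) → ℝ)
    (hδ01 : ∀ P, 0 ≤ δ P ∧ δ P ≤ 1)
    (hδuniv : δ Set.univ = 1)
    (hδmono : ∀ P Q, P ⊆ Q → δ P ≤ δ Q)
    (hδunion : ∀ P Q, δ (P ∪ Q) ≤ δ P + δ Q)
    (hδtrans : ∀ (α : SInt K S) (P : Set (SInt K S)), δ ((α + ·) '' P) = δ P)
    (hδideal : ∀ I : Ideal (SInt K S), I ≠ ⊥ →
        δ (I : Set (SInt K S)) = 1 / (Nat.card (SInt K S ⧸ I) : ℝ))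
    (A B C : Polynomial (SInt K S))
    (hrel : B ^ 2 - A * C = f.map (algebraMap (𝓞 K) (SInt K S)))
    (hprim : Ideal.span {A, 2 * B, C} = (⊤ : Ideal (Polynomial (SInt K S))))
    (hcop : IsCoprime (A.map (algebraMap (SInt K S) K)) (f.map (algebraMap (𝓞 K) K)))
    (hgenus : ¬ ∃ ε : K, ε ≠ 0 ∧ ∃ p : K[X],
        (f.map (algebraMap (𝓞 K) K)) ∣
          (A.map (algebraMap (SInt K S) K) - Polynomial.C ε * p ^ 2)) :
    δ {n : SInt K S |
      ∃ M : Matrix (Fin 2) (Fin 2) (SInt K S), IsUnit M.det ∧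
        ∀ x y : SInt K S,
          M.det * (A.eval n * x ^ 2 + 2 * B.eval n * x * y + C.eval n * y ^ 2) =
            (M 0 0 * x + M 0 1 * y) ^ 2
              - (f.map (algebraMap (𝓞 K) (SInt K S))).eval n
                * (M 1 0 * x + M 1 1 * y) ^ 2} = 0 := by
  have hmap : (f.map (algebraMap (𝓞 K) (SInt K S))).map (algebraMap (SInt K S) K) =
      f.map (algebraMap (𝓞 K) K) := by
    rw [Polynomial.map_map, ← IsScalarTower.algebraMap_eq]
  exact trivial_specializations_density_zero_general _ A B C
    (hmap ▸ squarefree_map_of_monic K hmonic hsqfree) ⟨hδmono, hδunion, hδtrans, hδideal⟩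
    (hmap ▸ hgenus)
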